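/- Let F be a field of characteristic zero and let P ∈ F[X_1,...,X_N] be a nonzero polynomial of degree at most Δ that contains at least one monomial of support at most ℓ. Fix a monomial order and let α be the trailing (minimal) monomial of P. If P = Σ_{i=1}^{T} F_i(Q_{i1},...,Q_{it}) where each Q_{ij} has degree at most d, then the support of α is at most 2e³d(ln T + t·ln(2t) + 1), where e is Euler's constant. -/

import Mathlib

open MvPolynomial

/-!
The argument bounds the dimension of a space of shifted partial derivatives of `P` from both sides.
Setting the variables outside `α` to zero preserves the trailing monomial, so assume that all `n`
variables occur in `α`. Then `x^b ∂_a P`, for a squarefree `a` of degree `k`, has trailing monomial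
`α - a + b`. If the supports of `a` and `b` are disjoint, this exponent determines both, so the
polynomials `x^b ∂_a P` with `deg b ≤ L` are linearly independent. By the chain rule they all lie in
the span of the products of a derivative of order at most `k` of some `F_i`, evaluated at the
`Q_{ij}`, with a monomial of degree at most `L + k (d - 1)`. Choosing `L = n (d - 1)` and `k` close
to `ln T + t ln 2`, the comparison of the two dimensions bounds `n`.
-/

lemma div_pow_le_choose {n k : ℕ} (hkn : k ≤ n) : ((n : ℝ) / k) ^ k ≤ n.choose k := by
  induction k generalizing n with
  | zero => simp
  | succ k ih =>
    obtain ⟨n, rfl⟩ : ∃ m, n = m + 1 := ⟨n - 1, by omega⟩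
    have hle : k ≤ n := by omega
    have hbase : (((n + 1 : ℕ) : ℝ) / (k + 1 : ℕ)) ^ k ≤ ((n : ℝ) / k) ^ k := by
      rcases Nat.eq_zero_or_pos k with rfl | hk
      · simp
      · have hratio : ((n + 1 : ℕ) : ℝ) / (k + 1 : ℕ) ≤ n / k := by
          rw [div_le_div_iff₀ (by positivity) (by positivity)]
          norm_cast
          nlinarith
        gcongr
    have habsorb : ((n + 1).choose (k + 1) : ℝ) = ((n + 1 : ℕ) : ℝ) / (k + 1 : ℕ) * n.choose k := by
      rw [div_mul_eq_mul_div, eq_div_iff (by positivity)]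
      exact_mod_cast (Nat.add_one_mul_choose_eq n k).symm
    rw [habsorb, pow_succ']
    gcongr
    exact hbase.trans (ih hle)

lemma choose_le_exp_mul_div_pow (n k : ℕ) :
    (n.choose k : ℝ) ≤ (Real.exp 1 * n / k) ^ k := by
  rcases Nat.eq_zero_or_pos k with rfl | hk
  · simp
  calc (n.choose k : ℝ) ≤ (n : ℝ) ^ k / k.factorial := Nat.choose_le_pow_div k n
    _ = ((n : ℝ) / k) ^ k * ((k : ℝ) ^ k / k.factorial) := by
        rw [div_pow, div_mul_div_cancel₀ (by positivity)]
    _ ≤ ((n : ℝ) / k) ^ k * Real.exp k := by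
        gcongr
        exact Real.pow_div_factorial_le_exp _ k.cast_nonneg k
    _ = (Real.exp 1 * n / k) ^ k := by
        rw [← Real.exp_one_pow, ← mul_pow]
        ring_nf

lemma choose_add_le_choose_mul_exp (n r j : ℕ) :
    ((n + r + j).choose n : ℝ) ≤ (n + r).choose n * Real.exp (n * j / (r + 1)) := by
  induction j with
  | zero => simp
  | succ j ih =>
    have hratio : ((n + r + j + 1).choose n : ℝ) =
        (n + r + j).choose n * (1 + n / (r + j + 1)) := by
      have h := Nat.choose_mul_succ_eq (n + r + j) n
      rw [show n + r + j + 1 - n = r + j + 1 by omega] at h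
      have h' : ((n + r + j).choose n : ℝ) * (n + r + j + 1) =
          (n + r + j + 1).choose n * (r + j + 1) := by exact_mod_cast h
      field_simp
      linarith
    have hexp : 1 + (n : ℝ) / (r + j + 1) ≤ Real.exp (n / (r + 1)) := by
      calc 1 + (n : ℝ) / (r + j + 1) ≤ n / (r + 1) + 1 := by
            rw [add_comm]
            gcongr
            linarith [j.cast_nonneg (α := ℝ)]
        _ ≤ _ := Real.add_one_le_exp _
    calc ((n + r + (j + 1)).choose n : ℝ)
        = (n + r + j).choose n * (1 + n / (r + j + 1)) := hratio
      _ ≤ (n + r).choose n * Real.exp (n * j / (r + 1)) * Real.exp (n / (r + 1)) := by gcongr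
      _ = (n + r).choose n * Real.exp (n * (j + 1 : ℕ) / (r + 1)) := by
          rw [mul_assoc, ← Real.exp_add]
          push_cast
          ring_nf

lemma choose_shift_le_choose_mul_exp_pow (n d k : ℕ) :
    ((n + (n * d + k * d)).choose n : ℝ) ≤ (n + n * d).choose n * Real.exp 1 ^ k := by
  rw [← add_assoc, Real.exp_one_pow]
  refine (choose_add_le_choose_mul_exp n (n * d) (k * d)).trans ?_
  gcongr
  rw [div_le_iff₀ (by positivity)]
  push_cast
  nlinarith [k.cast_nonneg (α := ℝ)]

lemma choose_sq_le_of_count {n d k t T : ℕ} (hkn : k ≤ n)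
    (hcount : n.choose k * (n - k + n * d).choose (n - k) ≤
      T * (t + k).choose t * (n + (n * d + k * d)).choose n) :
    (n.choose k : ℝ) ^ 2 ≤ T * 2 ^ t * (2 * Real.exp 1) ^ k * (n + n * d).choose k := by
  have hsplit : ((n + n * d).choose n : ℝ) * n.choose k =
      (n + n * d).choose k * (n - k + n * d).choose (n - k) := by
    rw [show n - k + n * d = n + n * d - k by omega]
    exact_mod_cast Nat.choose_mul hkn
  have htwo : ((t + k).choose t : ℝ) ≤ 2 ^ t * 2 ^ k := by
    rw [← pow_add]
    exact_mod_cast Nat.choose_le_two_pow _ _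
  have hcount' : (n.choose k : ℝ) * (n - k + n * d).choose (n - k) ≤
      T * (t + k).choose t * (n + (n * d + k * d)).choose n := by exact_mod_cast hcount
  have hpos : (0 : ℝ) < (n + n * d).choose n := by exact_mod_cast Nat.choose_pos (by omega)
  refine le_of_mul_le_mul_right ?_ hpos
  calc (n.choose k : ℝ) ^ 2 * (n + n * d).choose n
      = (n + n * d).choose k * (n.choose k * (n - k + n * d).choose (n - k)) := by
        linear_combination (n.choose k : ℝ) * hsplit
    _ ≤ (n + n * d).choose k * (T * (2 ^ t * 2 ^ k) *
          ((n + n * d).choose n * Real.exp 1 ^ k)) := by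
        refine mul_le_mul_of_nonneg_left (hcount'.trans ?_) (by positivity)
        gcongr
        exact choose_shift_le_choose_mul_exp_pow n d k
    _ = T * 2 ^ t * (2 * Real.exp 1) ^ k * (n + n * d).choose k * (n + n * d).choose n := by
        rw [mul_pow]
        ring

lemma le_of_choose_sq_le {n M k : ℕ} {c : ℝ} (hk : k ≠ 0) (hkn : k ≤ n) (hc : 0 ≤ c)
    (h : (n.choose k : ℝ) ^ 2 ≤ c ^ k * M.choose k) :
    (n : ℝ) ^ 2 ≤ c * Real.exp 1 * M * k := by
  have hpow : (((n : ℝ) / k) ^ 2) ^ k ≤ (c * (Real.exp 1 * M / k)) ^ k :=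
    calc (((n : ℝ) / k) ^ 2) ^ k = (((n : ℝ) / k) ^ k) ^ 2 := pow_right_comm ..
      _ ≤ (n.choose k : ℝ) ^ 2 := by gcongr; exact div_pow_le_choose hkn
      _ ≤ c ^ k * M.choose k := h
      _ ≤ c ^ k * (Real.exp 1 * M / k) ^ k := by gcongr; exact choose_le_exp_mul_div_pow M k
      _ = (c * (Real.exp 1 * M / k)) ^ k := (mul_pow ..).symm
  have hbase := (pow_le_pow_iff_left₀ (by positivity) (by positivity) hk).1 hpow
  rw [div_pow, div_le_iff₀ (by positivity)] at hbase
  calc (n : ℝ) ^ 2 ≤ _ := hbase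
    _ = c * Real.exp 1 * M * k := by field_simp

/-- With `n` variables, derivatives of order `k` and shifts of degree at most `n * d`, `hcount`
compares the two bounds on the dimension of the span of the shifted derivatives. -/
lemma le_of_count {n d k t T : ℕ} (hk : k ≠ 0) (hkn : k ≤ n)
    (hT : (T : ℝ) * 2 ^ t ≤ Real.exp 1 ^ k)
    (hcount : n.choose k * (n - k + n * d).choose (n - k) ≤
      T * (t + k).choose t * (n + (n * d + k * d)).choose n) :
    (n : ℝ) ≤ 2 * Real.exp 1 ^ 3 * (d + 1) * k := by
  have hn : (0 : ℝ) < n := by exact_mod_cast (Nat.pos_of_ne_zero hk).trans_le hkn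
  have hchoose : (n.choose k : ℝ) ^ 2 ≤ (2 * Real.exp 1 ^ 2) ^ k * (n + n * d).choose k :=
    calc (n.choose k : ℝ) ^ 2 ≤ T * 2 ^ t * (2 * Real.exp 1) ^ k * (n + n * d).choose k :=
          choose_sq_le_of_count hkn hcount
      _ ≤ Real.exp 1 ^ k * (2 * Real.exp 1) ^ k * (n + n * d).choose k := by gcongr
      _ = (2 * Real.exp 1 ^ 2) ^ k * (n + n * d).choose k := by
          rw [← mul_pow]
          ring_nf
  refine le_of_mul_le_mul_right ?_ hn
  calc (n : ℝ) * n = (n : ℝ) ^ 2 := (sq _).symm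
    _ ≤ 2 * Real.exp 1 ^ 2 * Real.exp 1 * (n + n * d : ℕ) * k :=
        le_of_choose_sq_le hk hkn (by positivity) hchoose
    _ = 2 * Real.exp 1 ^ 3 * (d + 1) * k * n := by
        push_cast
        ring

/-- A linear order on an additive structure that is invariant under translation, given as a bare
relation because `σ →₀ ℕ` already carries the componentwise order. -/
structure IsAddLinearOrder {M : Type*} [Add M] (le : M → M → Prop) : Prop
    extends IsLinearOrder M le where
  add_right : ∀ a b c, le a b → le (a + c) (b + c)

namespace IsAddLinearOrder

variable {M M' : Type*} [Add M] {le : M → M → Prop}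

lemma of_add_right [IsRightCancelAdd M] (hle : IsAddLinearOrder le) {a b c : M}
    (h : le (a + c) (b + c)) : le a b := by
  rcases hle.total a b with hab | hba
  · exact hab
  · rw [add_right_cancel (hle.antisymm _ _ h (hle.add_right _ _ c hba))]
    exact hle.refl b

lemma comap [Add M'] (hle : IsAddLinearOrder le) {f : M' → M}
    (hf : f.Injective) (hadd : ∀ a b, f (a + b) = f a + f b) :
    IsAddLinearOrder (fun a b => le (f a) (f b)) where
  refl a := hle.refl (f a)
  trans a b c := hle.trans (f a) (f b) (f c)
  antisymm a b hab hba := hf (hle.antisymm _ _ hab hba)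
  total a b := hle.total (f a) (f b)
  add_right a b c h := by
    rw [hadd, hadd]
    exact hle.add_right _ _ _ h

end IsAddLinearOrder

/-- `α` is the trailing monomial of `p`: the exponent vector of the `le`-least monomial occurring
in `p`. -/
structure IsTrailingMonomial {σ R : Type*} [CommSemiring R] (le : (σ →₀ ℕ) → (σ →₀ ℕ) → Prop)
    (p : MvPolynomial σ R) (α : σ →₀ ℕ) : Prop where
  mem_support : α ∈ p.support
  le_of_mem_support : ∀ β ∈ p.support, le α β

lemma pderiv_left_comm {σ R : Type*} [CommSemiring R] (i j : σ) (p : MvPolynomial σ R) :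
    pderiv i (pderiv j p) = pderiv j (pderiv i p) := by
  classical
  rcases eq_or_ne i j with rfl | hij
  · rfl
  ext m
  simp only [coeff_pderiv, Finsupp.add_apply, Finsupp.single_eq_of_ne hij,
    Finsupp.single_eq_of_ne hij.symm, add_zero, add_right_comm m]
  ring

instance pderiv_leftCommutative {σ R : Type*} [CommSemiring R] :
    LeftCommutative fun (i : σ) (p : MvPolynomial σ R) => pderiv i p :=
  ⟨pderiv_left_comm⟩

/-- The iterated partial derivative `∂^s p`, where the order of differentiation is a multiset of
variables. -/
noncomputable def iterPDeriv {σ R : Type*} [CommSemiring R] (s : Multiset σ)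
    (p : MvPolynomial σ R) : MvPolynomial σ R :=
  s.foldr (fun i q => pderiv i q) p

section IterPDeriv

variable {σ R : Type*} [CommSemiring R]

lemma iterPDeriv_zero (p : MvPolynomial σ R) : iterPDeriv 0 p = p :=
  Multiset.foldr_zero ..

lemma iterPDeriv_cons (i : σ) (s : Multiset σ) (p : MvPolynomial σ R) :
    iterPDeriv (i ::ₘ s) p = pderiv i (iterPDeriv s p) :=
  Multiset.foldr_cons ..

end IterPDeriv

namespace IsTrailingMonomial

variable {σ R : Type*} [CommSemiring R] {le : (σ →₀ ℕ) → (σ →₀ ℕ) → Prop}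
  {p : MvPolynomial σ R} {α : σ →₀ ℕ}

lemma monomial_one_mul (hle : IsAddLinearOrder le) (hα : IsTrailingMonomial le p α) (b : σ →₀ ℕ) :
    IsTrailingMonomial le (monomial b 1 * p) (α + b) where
  mem_support := by
    rw [mem_support_iff, add_comm α b, coeff_monomial_mul, one_mul]
    exact mem_support_iff.1 hα.mem_support
  le_of_mem_support β hβ := by
    rw [mem_support_iff, coeff_monomial_mul', one_mul] at hβ
    obtain ⟨hb, hcoeff⟩ := ite_ne_right_iff.1 hβ
    rw [← tsub_add_cancel_of_le hb]
    exact hle.add_right _ _ b (hα.le_of_mem_support _ (mem_support_iff.2 hcoeff))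

lemma killCompl {τ : Type*} {f : τ → σ} (hf : f.Injective) {β : τ →₀ ℕ}
    (hβ : IsTrailingMonomial le p (β.mapDomain f)) :
    IsTrailingMonomial (fun a b => le (a.mapDomain f) (b.mapDomain f))
      (MvPolynomial.killCompl hf p) β where
  mem_support := by
    rw [mem_support_iff, coeff_killCompl]
    exact mem_support_iff.1 hβ.mem_support
  le_of_mem_support γ hγ := by
    rw [mem_support_iff, coeff_killCompl] at hγ
    exact hβ.le_of_mem_support _ (mem_support_iff.2 hγ)

variable [NoZeroDivisors R] [CharZero R]

lemma pderiv (hle : IsAddLinearOrder le) {i : σ}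
    (hα : IsTrailingMonomial le p (α + Finsupp.single i 1)) :
    IsTrailingMonomial le (MvPolynomial.pderiv i p) α where
  mem_support := by
    rw [mem_support_iff, coeff_pderiv]
    exact mul_ne_zero (mem_support_iff.1 hα.mem_support) (Nat.cast_add_one_ne_zero _)
  le_of_mem_support β hβ := by
    rw [mem_support_iff, coeff_pderiv] at hβ
    exact hle.of_add_right
      (hα.le_of_mem_support _ (mem_support_iff.2 (left_ne_zero_of_mul hβ)))

lemma iterPDeriv [DecidableEq σ] (hle : IsAddLinearOrder le) {s : Multiset σ}
    (hα : IsTrailingMonomial le p (α + s.toFinsupp)) :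
    IsTrailingMonomial le (iterPDeriv s p) α := by
  induction s using Multiset.induction generalizing α with
  | empty => simpa only [iterPDeriv_zero, Multiset.toFinsupp_zero, add_zero] using hα
  | cons i s ih =>
    rw [iterPDeriv_cons]
    refine (ih ?_).pderiv hle
    rwa [add_assoc, ← Multiset.toFinsupp_singleton, ← Multiset.toFinsupp_add,
      Multiset.singleton_add]

end IsTrailingMonomial

lemma linearIndependent_of_isTrailingMonomial {σ R J : Type*} [CommRing R] [NoZeroDivisors R]
    {le : (σ →₀ ℕ) → (σ →₀ ℕ) → Prop} (hle : IsLinearOrder _ le)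
    {v : J → MvPolynomial σ R} {m : J → σ →₀ ℕ} (hm : m.Injective)
    (hv : ∀ j, IsTrailingMonomial le (v j) (m j)) : LinearIndependent R v := by
  classical
  rw [linearIndependent_iff']
  intro s c hc
  by_contra! hne
  obtain ⟨j₀, hj₀s, hj₀⟩ := hne
  have : Nonempty {j ∈ s | c j ≠ 0} := ⟨⟨j₀, Finset.mem_filter.2 ⟨hj₀s, hj₀⟩⟩⟩
  have : IsTrans (σ →₀ ℕ) (Function.swap le) := ⟨fun a b c hab hbc => hle.trans c b a hbc hab⟩
  have hdir : Directed (Function.swap le) fun j : {j ∈ s | c j ≠ 0} => m j := fun i j =>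
    (hle.total (m i) (m j)).elim (fun h => ⟨i, hle.refl _, h⟩) fun h => ⟨j, h, hle.refl _⟩
  obtain ⟨⟨i, hi⟩, hmin⟩ := hdir.finite_le id
  obtain ⟨his, hci⟩ := Finset.mem_filter.1 hi
  have hother : ∀ j ∈ s, j ≠ i → coeff (m i) (c j • v j) = 0 := by
    intro j hjs hji
    by_contra hcoeff
    rw [coeff_smul, smul_eq_mul] at hcoeff
    have hle_ij : le (m i) (m j) :=
      hmin ⟨j, Finset.mem_filter.2 ⟨hjs, left_ne_zero_of_mul hcoeff⟩⟩
    have hle_ji : le (m j) (m i) :=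
      (hv j).le_of_mem_support _ (mem_support_iff.2 (right_ne_zero_of_mul hcoeff))
    exact hji (hm (hle.antisymm _ _ hle_ji hle_ij))
  have hcoeff := congrArg (coeff (m i)) hc
  rw [coeff_sum, Finset.sum_eq_single_of_mem i his hother, coeff_smul, smul_eq_mul,
    coeff_zero] at hcoeff
  exact mul_ne_zero hci (mem_support_iff.1 (hv i).mem_support) hcoeff

section SquarefreeExponents

variable {σ : Type*} [DecidableEq σ]

lemma toFinsupp_val_apply (a : Finset σ) (i : σ) :
    Multiset.toFinsupp a.val i = if i ∈ a then 1 else 0 := by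
  rw [Multiset.toFinsupp_apply, Multiset.count_eq_of_nodup a.nodup]
  rfl

lemma toFinsupp_val_le {a : Finset σ} {α : σ →₀ ℕ} (ha : a ⊆ α.support) :
    Multiset.toFinsupp a.val ≤ α := by
  intro i
  rw [toFinsupp_val_apply]
  split_ifs with hi
  · exact Nat.one_le_iff_ne_zero.2 (Finsupp.mem_support_iff.1 (ha hi))
  · exact Nat.zero_le _

lemma eq_of_add_toFinsupp_val_eq {a a' : Finset σ} {b b' : σ →₀ ℕ}
    (hb : Disjoint b.support a) (hb' : Disjoint b'.support a')
    (h : b + Multiset.toFinsupp a'.val = b' + Multiset.toFinsupp a.val) : a = a' ∧ b = b' := by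
  have ha : a = a' := by
    ext i
    have hi := DFunLike.congr_fun h i
    simp only [Finsupp.add_apply, toFinsupp_val_apply] at hi
    have hbi : i ∈ a → b i = 0 := fun hia =>
      Finsupp.notMem_support_iff.1 (Finset.disjoint_right.1 hb hia)
    have hbi' : i ∈ a' → b' i = 0 := fun hia =>
      Finsupp.notMem_support_iff.1 (Finset.disjoint_right.1 hb' hia)
    grind
  subst ha
  exact ⟨rfl, add_right_cancel h⟩

end SquarefreeExponents

lemma linearIndependent_monomial_mul_iterPDeriv {σ R : Type*} [CommRing R] [NoZeroDivisors R]
    [CharZero R] {le : (σ →₀ ℕ) → (σ →₀ ℕ) → Prop} (hle : IsAddLinearOrder le)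
    {p : MvPolynomial σ R} {α : σ →₀ ℕ} (hα : IsTrailingMonomial le p α) :
    LinearIndependent R
      fun x : {x : Finset σ × (σ →₀ ℕ) // x.1 ⊆ α.support ∧ Disjoint x.2.support x.1} =>
        monomial x.1.2 1 * iterPDeriv x.1.1.val p := by
  classical
  have hsub : ∀ a : Finset σ, a ⊆ α.support →
      α - Multiset.toFinsupp a.val + Multiset.toFinsupp a.val = α :=
    fun a ha => tsub_add_cancel_of_le (toFinsupp_val_le ha)
  refine linearIndependent_of_isTrailingMonomial hle.toIsLinearOrder
    (m := fun x => α - Multiset.toFinsupp x.1.1.val + x.1.2) ?_ fun x =>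
      .monomial_one_mul hle (.iterPDeriv hle ((hsub _ x.2.1).symm ▸ hα)) _
  rintro ⟨⟨a, b⟩, ha, hb⟩ ⟨⟨a', b'⟩, ha', hb'⟩ hm
  have hexp : b + Multiset.toFinsupp a'.val = b' + Multiset.toFinsupp a.val := by
    ext i
    have hmi := DFunLike.congr_fun hm i
    have hai := DFunLike.congr_fun (hsub a ha) i
    have hai' := DFunLike.congr_fun (hsub a' ha') i
    simp only [Finsupp.add_apply, Finsupp.tsub_apply] at hmi hai hai' ⊢
    omega
  obtain ⟨rfl, rfl⟩ := eq_of_add_toFinsupp_val_eq hb hb' hexp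
  rfl

section BoundedExponents

variable {σ : Type*} [DecidableEq σ]

/-- The exponent vectors of the monomials of degree at most `L` in the variables in `s`. -/
def boundedExponents (s : Finset σ) (L : ℕ) : Finset (σ →₀ ℕ) :=
  (Finset.range (L + 1)).biUnion s.finsuppAntidiag

lemma mem_boundedExponents {s : Finset σ} {L : ℕ} {c : σ →₀ ℕ} :
    c ∈ boundedExponents s L ↔ c.support ⊆ s ∧ c.degree ≤ L := by
  simp only [boundedExponents, Finset.mem_biUnion, Finset.mem_range, Order.lt_add_one_iff,
    Finset.mem_finsuppAntidiag']
  exact ⟨fun ⟨_, hi, hsum, hsupp⟩ => ⟨hsupp, hsum.trans_le hi⟩, fun h => ⟨_, h.2, rfl, h.1⟩⟩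

lemma card_boundedExponents (s : Finset σ) (L : ℕ) :
    (boundedExponents s L).card = (s.card + L).choose s.card := by
  rw [boundedExponents, Finset.card_biUnion]
  · simp only [Finset.card_finsuppAntidiag_nat_eq_multichoose]
    rw [Nat.sum_range_multichoose, add_comm]
  · intro i _ j _ hij
    refine Finset.disjoint_left.2 fun c hci hcj => hij ?_
    rw [← (Finset.mem_finsuppAntidiag.1 hci).1, (Finset.mem_finsuppAntidiag.1 hcj).1]

end BoundedExponents

section DerivativeSpan

lemma degree_le_totalDegree {σ R : Type*} [CommSemiring R] {p : MvPolynomial σ R} {m : σ →₀ ℕ}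
    (hm : coeff m p ≠ 0) : m.degree ≤ p.totalDegree :=
  le_totalDegree (mem_support_iff.2 hm)

lemma totalDegree_pderiv_le {σ R : Type*} [CommSemiring R] (i : σ) (p : MvPolynomial σ R) :
    (pderiv i p).totalDegree ≤ p.totalDegree - 1 := by
  refine Finset.sup_le fun m hm => ?_
  rw [mem_support_iff, coeff_pderiv] at hm
  have hle := degree_le_totalDegree (left_ne_zero_of_mul hm)
  rw [map_add, Finsupp.degree_single] at hle
  exact Nat.le_sub_of_add_le hle

lemma totalDegree_killCompl_le {σ τ R : Type*} [CommSemiring R] {f : σ → τ} (hf : f.Injective)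
    (p : MvPolynomial τ R) : (killCompl hf p).totalDegree ≤ p.totalDegree := by
  refine Finset.sup_le fun m hm => ?_
  rw [mem_support_iff, coeff_killCompl] at hm
  exact (Finsupp.degree_mapDomain f m).symm.trans_le (degree_le_totalDegree hm)

lemma derivation_aeval {R A M τ : Type*} [CommSemiring R] [CommSemiring A] [Algebra R A]
    [AddCommMonoid M] [Module A M] [Module R M] [Fintype τ]
    (D : Derivation R A M) (Q : τ → A) (G : MvPolynomial τ R) :
    D (aeval Q G) = ∑ j, aeval Q (pderiv j G) • D (Q j) := by
  classical
  induction G using MvPolynomial.induction_on with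
  | C a => simp
  | add p q hp hq => simp only [map_add, hp, hq, add_smul, Finset.sum_add_distrib]
  | mul_X p j hp =>
    simp only [map_mul, Derivation.leibniz, aeval_X, hp, pderiv_X, map_add, smul_eq_mul,
      add_smul, Finset.sum_add_distrib, Finset.smul_sum, mul_smul]
    simp [Pi.single_apply]

variable {σ τ ι R : Type*} [CommSemiring R]

/-- The span of the products of a polynomial of degree at most `e` with a composition
`(∂^s G_i)(Q_{i1}, Q_{i2}, …)` where `|s| ≤ m`. It contains the shifted partial derivatives of
`∑ i, G_i(Q_{i1}, Q_{i2}, …)`, and `m` and `e` record how far these have been taken. -/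
noncomputable def shiftedDerivSpan (Q : ι → τ → MvPolynomial σ R) (G : ι → MvPolynomial τ R)
    (m e : ℕ) : Submodule R (MvPolynomial σ R) :=
  Submodule.span R {p | ∃ i, ∃ s : Multiset τ, s.card ≤ m ∧ p = aeval (Q i) (iterPDeriv s (G i))} *
    restrictTotalDegree σ R e

variable {Q : ι → τ → MvPolynomial σ R} {G : ι → MvPolynomial τ R} {m e d : ℕ}
  {p : MvPolynomial σ R}

lemma aeval_iterPDeriv_mul_mem_shiftedDerivSpan (i : ι) {s : Multiset τ} (hs : s.card ≤ m)
    (hp : p.totalDegree ≤ e) :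
    aeval (Q i) (iterPDeriv s (G i)) * p ∈ shiftedDerivSpan Q G m e :=
  Submodule.mul_mem_mul (Submodule.subset_span ⟨i, s, hs, rfl⟩)
    ((mem_restrictTotalDegree ..).2 hp)

lemma sum_aeval_mem_shiftedDerivSpan [Fintype ι] :
    ∑ i, aeval (Q i) (G i) ∈ shiftedDerivSpan Q G 0 0 := by
  refine Submodule.sum_mem _ fun i _ => ?_
  simpa only [iterPDeriv_zero, mul_one] using
    aeval_iterPDeriv_mul_mem_shiftedDerivSpan (p := 1) i Multiset.card_zero.le totalDegree_one.le

lemma shiftedDerivSpan_induction {C : MvPolynomial σ R → Prop}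
    (mem : ∀ i (s : Multiset τ) (q : MvPolynomial σ R), s.card ≤ m → q.totalDegree ≤ e →
      C (aeval (Q i) (iterPDeriv s (G i)) * q))
    (add : ∀ p q, C p → C q → C (p + q)) (zero : C 0)
    (hp : p ∈ shiftedDerivSpan Q G m e) : C p := by
  refine Submodule.mul_induction_on hp (fun p hp q hq => ?_) add
  induction hp using Submodule.span_induction generalizing q with
  | mem p hp =>
    obtain ⟨i, s, hs, rfl⟩ := hp
    exact mem i s q hs ((mem_restrictTotalDegree ..).1 hq)
  | zero => rwa [zero_mul]
  | add p p' _ _ hp hp' =>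
    rw [add_mul]
    exact add _ _ (hp q hq) (hp' q hq)
  | smul a p _ hp =>
    rw [smul_mul_assoc, ← mul_smul_comm]
    exact hp _ (Submodule.smul_mem _ a hq)

lemma mul_mem_shiftedDerivSpan {q : MvPolynomial σ R} {L : ℕ}
    (hp : p ∈ shiftedDerivSpan Q G m e) (hq : q.totalDegree ≤ L) :
    q * p ∈ shiftedDerivSpan Q G m (L + e) := by
  refine shiftedDerivSpan_induction (C := fun p => q * p ∈ _) (fun i s r hs hr => ?_)
    (fun p p' hp hp' => ?_) ?_ hp
  · rw [mul_left_comm]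
    exact aeval_iterPDeriv_mul_mem_shiftedDerivSpan i hs
      ((totalDegree_mul ..).trans (add_le_add hq hr))
  · rw [mul_add]
    exact add_mem hp hp'
  · rw [mul_zero]
    exact zero_mem _

lemma pderiv_mem_shiftedDerivSpan [Finite τ] (hQ : ∀ i j, (Q i j).totalDegree ≤ d + 1) (x : σ)
    (hp : p ∈ shiftedDerivSpan Q G m e) : pderiv x p ∈ shiftedDerivSpan Q G (m + 1) (e + d) := by
  have := Fintype.ofFinite τ
  refine shiftedDerivSpan_induction (C := fun p => pderiv x p ∈ _) (fun i s q hs hq => ?_)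
    (fun p p' hp hp' => ?_) ?_ hp
  · have hq' : (pderiv x q).totalDegree ≤ e + d :=
      (totalDegree_pderiv_le ..).trans (by omega)
    rw [Derivation.leibniz, derivation_aeval, smul_eq_mul, smul_eq_mul, Finset.mul_sum]
    refine add_mem (aeval_iterPDeriv_mul_mem_shiftedDerivSpan i (hs.trans m.le_succ) hq')
      (Submodule.sum_mem _ fun j _ => ?_)
    rw [smul_eq_mul, mul_left_comm, ← iterPDeriv_cons]
    refine aeval_iterPDeriv_mul_mem_shiftedDerivSpan i ?_ ?_
    · rw [Multiset.card_cons]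
      exact Nat.succ_le_succ hs
    · have hQij : (pderiv x (Q i j)).totalDegree ≤ d :=
        (totalDegree_pderiv_le ..).trans (Nat.sub_le_of_le_add (hQ i j))
      exact (totalDegree_mul ..).trans (add_le_add hq hQij)
  · rw [map_add]
    exact add_mem hp hp'
  · rw [map_zero]
    exact zero_mem _

lemma iterPDeriv_mem_shiftedDerivSpan [Finite τ] (hQ : ∀ i j, (Q i j).totalDegree ≤ d + 1)
    (s : Multiset σ) (hp : p ∈ shiftedDerivSpan Q G m e) :
    iterPDeriv s p ∈ shiftedDerivSpan Q G (m + s.card) (e + s.card * d) := by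
  induction s using Multiset.induction with
  | empty => simpa only [iterPDeriv_zero, Multiset.card_zero, zero_mul, add_zero] using hp
  | cons x s ih =>
    rw [iterPDeriv_cons, Multiset.card_cons, Nat.succ_mul, ← add_assoc, ← add_assoc]
    exact pderiv_mem_shiftedDerivSpan hQ x ih

lemma shiftedDerivSpan_le_span_image [Fintype σ] [Fintype τ] [Fintype ι] [DecidableEq σ]
    [DecidableEq τ] [DecidableEq (MvPolynomial σ R)] :
    shiftedDerivSpan Q G m e ≤ Submodule.span R
      ((Finset.univ ×ˢ boundedExponents Finset.univ m ×ˢ boundedExponents Finset.univ e).image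
        fun x : ι × (τ →₀ ℕ) × (σ →₀ ℕ) =>
          aeval (Q x.1) (iterPDeriv x.2.1.toMultiset (G x.1)) * monomial x.2.2 1 : Finset _) := by
  rw [shiftedDerivSpan, restrictTotalDegree, restrictSupport_eq_span, Submodule.span_mul_span]
  refine Submodule.span_mono ?_
  rintro _ ⟨_, ⟨i, s, hs, rfl⟩, _, ⟨c, hc, rfl⟩, rfl⟩
  refine Finset.mem_coe.2 (Finset.mem_image.2 ⟨(i, s.toFinsupp, c), ?_, ?_⟩)
  · simp only [Finset.mem_product, Finset.mem_univ, mem_boundedExponents, Finset.subset_univ,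
      true_and]
    refine ⟨?_, hc⟩
    exact (Multiset.toFinsupp_sum_eq s).trans_le hs
  · simp only [Multiset.toFinsupp_toMultiset]

end DerivativeSpan

lemma card_le_of_linearIndependent_of_mem_shiftedDerivSpan {σ τ ι J R : Type*} [CommRing R]
    [Nontrivial R] [Fintype σ] [Fintype τ] [Fintype ι] [Fintype J]
    {Q : ι → τ → MvPolynomial σ R} {G : ι → MvPolynomial τ R} {m e : ℕ}
    {v : J → MvPolynomial σ R} (hv : LinearIndependent R v)
    (hmem : ∀ j, v j ∈ shiftedDerivSpan Q G m e) :
    Fintype.card J ≤ Fintype.card ι * (Fintype.card τ + m).choose (Fintype.card τ) *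
      (Fintype.card σ + e).choose (Fintype.card σ) := by
  classical
  have hspan := linearIndependent_le_span' v hv _
    (Set.range_subset_iff.2 fun j => shiftedDerivSpan_le_span_image (hmem j))
  rw [Cardinal.mk_fintype, Nat.cast_le] at hspan
  refine hspan.trans ((Fintype.card_coe _).trans_le <| Finset.card_image_le.trans_eq ?_)
  simp only [Finset.card_product, card_boundedExponents, Finset.card_univ, mul_assoc]

section TrailingSupport

variable {σ τ ι R : Type*} [CommRing R] [IsDomain R] [CharZero R] [Fintype ι]
  {le : (σ →₀ ℕ) → (σ →₀ ℕ) → Prop} {Q : ι → τ → MvPolynomial σ R} {G : ι → MvPolynomial τ R}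
  {α : σ →₀ ℕ} {d : ℕ}

lemma eq_zero_of_isTrailingMonomial_of_totalDegree_eq_zero [Finite τ]
    (hle : IsAddLinearOrder le)
    (hQ : ∀ i j, (Q i j).totalDegree = 0)
    (hα : IsTrailingMonomial le (∑ i, aeval (Q i) (G i)) α) : α = 0 := by
  have := Fintype.ofFinite τ
  ext x
  by_contra hx
  have hsub : α - Finsupp.single x 1 + Finsupp.single x 1 = α :=
    tsub_add_cancel_of_le (Finsupp.single_le_iff.2 (Nat.one_le_iff_ne_zero.2 hx))
  have hderiv : pderiv x (∑ i, aeval (Q i) (G i)) = 0 := by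
    have hQ₀ : ∀ i j, pderiv x (Q i j) = 0 := fun i j => by
      rw [totalDegree_eq_zero_iff_eq_C.1 (hQ i j), pderiv_C]
    simp only [map_sum, derivation_aeval, hQ₀, smul_zero, Finset.sum_const_zero]
  have htrail := (hsub.symm ▸ hα).pderiv hle
  rw [hderiv] at htrail
  exact Finset.notMem_empty _ (support_zero (R := R) ▸ htrail.mem_support)

variable [Fintype τ]

lemma choose_mul_choose_le_of_isTrailingMonomial [Fintype σ] (hle : IsAddLinearOrder le)
    (hQ : ∀ i j, (Q i j).totalDegree ≤ d + 1)
    (hα : IsTrailingMonomial le (∑ i, aeval (Q i) (G i)) α) (hα₀ : ∀ x, α x ≠ 0) (k L : ℕ) :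
    (Fintype.card σ).choose k * (Fintype.card σ - k + L).choose (Fintype.card σ - k) ≤
      Fintype.card ι * (Fintype.card τ + k).choose (Fintype.card τ) *
        (Fintype.card σ + (L + k * d)).choose (Fintype.card σ) := by
  classical
  let J : Finset (Σ _ : Finset σ, σ →₀ ℕ) :=
    (Finset.powersetCard k Finset.univ).sigma fun a => boundedExponents aᶜ L
  have hJ : ∀ {x}, x ∈ J ↔ x.1.card = k ∧ Disjoint x.2.support x.1 ∧ x.2.degree ≤ L := by
    simp only [J, Finset.mem_sigma, Finset.mem_powersetCard_univ, mem_boundedExponents,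
      Finset.subset_compl_iff_disjoint_right, implies_true]
  have hcard : J.card =
      (Fintype.card σ).choose k * (Fintype.card σ - k + L).choose (Fintype.card σ - k) := by
    rw [Finset.card_sigma, Finset.sum_const_nat fun a ha => ?_, Finset.card_powersetCard,
      Finset.card_univ]
    rw [card_boundedExponents, Finset.card_compl, (Finset.mem_powersetCard.1 ha).2]
  have hsupp : α.support = Finset.univ :=
    Finset.eq_univ_iff_forall.2 fun x => Finsupp.mem_support_iff.2 (hα₀ x)
  have hindep := (linearIndependent_monomial_mul_iterPDeriv hle hα).comp
    (fun x : J => ⟨(x.1.1, x.1.2), hsupp ▸ Finset.subset_univ _, (hJ.1 x.2).2.1⟩)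
    fun ⟨⟨_, _⟩, _⟩ ⟨⟨_, _⟩, _⟩ h => by simpa using h
  rw [← hcard, ← Fintype.card_coe]
  refine card_le_of_linearIndependent_of_mem_shiftedDerivSpan (Q := Q) (G := G) hindep ?_
  rintro ⟨⟨a, b⟩, hab⟩
  obtain ⟨rfl, -, hb⟩ := hJ.1 hab
  have hderiv := iterPDeriv_mem_shiftedDerivSpan hQ a.val
    (sum_aeval_mem_shiftedDerivSpan (Q := Q) (G := G))
  rw [zero_add, zero_add] at hderiv
  exact mul_mem_shiftedDerivSpan hderiv ((totalDegree_monomial_le b 1).trans hb)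

lemma choose_mul_choose_le_of_isTrailingMonomial_support (hle : IsAddLinearOrder le)
    (hQ : ∀ i j, (Q i j).totalDegree ≤ d + 1)
    (hα : IsTrailingMonomial le (∑ i, aeval (Q i) (G i)) α) (k L : ℕ) :
    α.support.card.choose k * (α.support.card - k + L).choose (α.support.card - k) ≤
      Fintype.card ι * (Fintype.card τ + k).choose (Fintype.card τ) *
        (α.support.card + (L + k * d)).choose α.support.card := by
  have hinj : (Subtype.val : α.support → σ).Injective := Subtype.val_injective
  let β : α.support →₀ ℕ := α.comapDomain Subtype.val hinj.injOn
  have hβ : β.mapDomain Subtype.val = α :=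
    Finsupp.mapDomain_comapDomain _ hinj α fun x hx => ⟨⟨x, hx⟩, rfl⟩
  have hβ₀ : ∀ x, β x ≠ 0 := fun x => by
    rw [Finsupp.comapDomain_apply]
    exact Finsupp.mem_support_iff.1 x.2
  have hrestrict : killCompl hinj (∑ i, aeval (Q i) (G i)) =
      ∑ i, aeval (fun j => killCompl hinj (Q i j)) (G i) := by
    simp only [map_sum, ← comp_aeval_apply]
  have htrail := (hβ.symm ▸ hα).killCompl hinj
  rw [hrestrict] at htrail
  simpa only [Fintype.card_coe] using choose_mul_choose_le_of_isTrailingMonomial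
    (hle.comap (Finsupp.mapDomain_injective hinj) fun _ _ => Finsupp.mapDomain_add)
    (fun i j => (totalDegree_killCompl_le hinj _).trans (hQ i j)) htrail
    hβ₀ k L

theorem trailing_monomial_support_bound_general (hle : IsAddLinearOrder le)
    (hQ : ∀ i j, (Q i j).totalDegree ≤ d)
    (hα : IsTrailingMonomial le (∑ i, aeval (Q i) (G i)) α) :
    (α.support.card : ℝ) ≤ 2 * Real.exp 1 ^ 3 * d *
      (Real.log (Fintype.card ι) + Fintype.card τ * Real.log 2 + 1) := by
  obtain _ | d := d
  · rw [eq_zero_of_isTrailingMonomial_of_totalDegree_eq_zero hle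
      (fun i j => Nat.le_zero.1 (hQ i j)) hα]
    simp
  have hι : Nonempty ι := by
    by_contra hempty
    rw [not_nonempty_iff] at hempty
    simpa using hα.mem_support
  set x := Real.log (Fintype.card ι) + Fintype.card τ * Real.log 2
  have hx₀ : 0 ≤ x := by positivity
  obtain ⟨k, hk₀, hxk, hkx⟩ : ∃ k : ℕ, k ≠ 0 ∧ x ≤ k ∧ (k : ℝ) ≤ x + 1 :=
    ⟨⌊x⌋₊ + 1, Nat.succ_ne_zero _, by exact_mod_cast (Nat.lt_floor_add_one x).le,
      by push_cast; gcongr; exact Nat.floor_le hx₀⟩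
  have hT : (Fintype.card ι : ℝ) * 2 ^ Fintype.card τ ≤ Real.exp 1 ^ k := by
    rw [Real.exp_one_pow, ← Real.log_le_iff_le_exp (by positivity),
      Real.log_mul (by positivity) (by positivity), Real.log_pow]
    exact hxk
  have hbound : (α.support.card : ℝ) ≤ 2 * Real.exp 1 ^ 3 * (d + 1) * k := by
    rcases le_total k α.support.card with hkn | hnk
    · exact le_of_count hk₀ hkn hT
        (choose_mul_choose_le_of_isTrailingMonomial_support hle hQ hα k _)
    · have hconst : 1 ≤ 2 * Real.exp 1 ^ 3 * ((d : ℝ) + 1) := by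
        nlinarith [one_le_pow₀ (n := 3) (Real.one_le_exp zero_le_one), d.cast_nonneg (α := ℝ)]
      exact (Nat.cast_le.2 hnk).trans (le_mul_of_one_le_left k.cast_nonneg hconst)
  push_cast
  exact hbound.trans (by gcongr)

end TrailingSupport

/-- Forbes's bound: if a nonzero polynomial `P` of degree at most `Δ`
containing a monomial of support at most `ℓ` can be written as
`P = Σ_{i=1}^{T} F_i(Q_{i1}, …, Q_{it})` with each `deg Q_{ij} ≤ d`, then the
trailing monomial of `P` (with respect to any monomial order) has support at
most `2e³d(ln T + t·ln(2t) + 1)`. -/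
theorem trailing_monomial_support_bound {F : Type*} [Field F] [CharZero F]
    {N T t d Δ ℓ : ℕ}
    (P : MvPolynomial (Fin N) F) (hP : P ≠ 0) (hdegP : P.totalDegree ≤ Δ)
    (hlow : ∃ μ ∈ P.support, μ.support.card ≤ ℓ)
    (le : (Fin N →₀ ℕ) → (Fin N →₀ ℕ) → Prop) (hlin : IsLinearOrder _ le)
    (hadd : ∀ μ ν σ : Fin N →₀ ℕ, le μ ν → le (μ + σ) (ν + σ))
    (hzero : ∀ μ : Fin N →₀ ℕ, le 0 μ)
    (Fi : Fin T → MvPolynomial (Fin t) F)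
    (Q : Fin T → Fin t → MvPolynomial (Fin N) F)
    (hQ : ∀ i j, (Q i j).totalDegree ≤ d)
    (hsum : P = ∑ i : Fin T, MvPolynomial.aeval (Q i) (Fi i))
    (α : Fin N →₀ ℕ) (hα : α ∈ P.support) (htrail : ∀ β ∈ P.support, le α β) :
    (α.support.card : ℝ) ≤
      2 * Real.exp 1 ^ 3 * d *
        (Real.log T + t * Real.log (2 * t) + 1) := by
  have hbound := trailing_monomial_support_bound_general ⟨hlin, hadd⟩ hQ
    ⟨hsum ▸ hα, hsum ▸ htrail⟩
  have hlog : (t : ℝ) * Real.log 2 ≤ t * Real.log (2 * t) := by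
    rcases Nat.eq_zero_or_pos t with rfl | ht
    · simp
    · have ht₁ : (1 : ℝ) ≤ t := by exact_mod_cast ht
      gcongr
      linarith
  rw [Fintype.card_fin, Fintype.card_fin] at hbound
  exact hbound.trans (by gcongr)
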